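/- Let L < U be reals and let g : [L,U] → ℝ be nonnegative and concave. Let c ∈ [L,U] satisfy c − L ≤ U − c. Then ∫_L^c g(x) dx ≤ 2·g(c)·(c − L). -/

import Mathlib

section MidpointConcavity

variable {𝕜 E β : Type*} [Ring 𝕜] [LinearOrder 𝕜] [IsStrictOrderedRing 𝕜] [Invertible (2 : 𝕜)]
  [AddCommGroup E] [Module 𝕜 E] [AddCommGroup β] [PartialOrder β] [Module 𝕜 β]
  {s : Set E} {g : E → β}

theorem midpoint_map_le_map_midpoint_of_concaveOn (hg : ConcaveOn 𝕜 s g) {x y : E} (hx : x ∈ s)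
    (hy : y ∈ s) : midpoint 𝕜 (g x) (g y) ≤ g (midpoint 𝕜 x y) := by
  have half_nonneg : (0 : 𝕜) ≤ ⅟2 := invOf_nonneg.mpr zero_le_two
  simpa only [midpoint_eq_smul_add, smul_add] using
    hg.2 hx hy half_nonneg half_nonneg invOf_two_add_invOf_two

theorem le_two_smul_of_concaveOn_of_pointReflection_nonneg [IsOrderedAddMonoid β] [PosSMulMono 𝕜 β]
    (hg : ConcaveOn 𝕜 s g) {c x : E} (hx : x ∈ s) (hx' : Equiv.pointReflection c x ∈ s)
    (hgx' : 0 ≤ g (Equiv.pointReflection c x)) : g x ≤ (2 : 𝕜) • g c :=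
  calc
    g x ≤ g x + g (Equiv.pointReflection c x) := le_add_of_nonneg_right hgx'
    _ = (2 : 𝕜) • midpoint 𝕜 (g x) (g (Equiv.pointReflection c x)) := by
      rw [two_smul, midpoint_add_self]
    _ ≤ (2 : 𝕜) • g (midpoint 𝕜 x (Equiv.pointReflection c x)) :=
      smul_le_smul_of_nonneg_left (midpoint_map_le_map_midpoint_of_concaveOn hg hx hx') zero_le_two
    _ = (2 : 𝕜) • g c := by rw [midpoint_pointReflection_right]

end MidpointConcavity

theorem pointReflection_mem_Icc_of_sub_le_sub {G : Type*} [AddCommGroup G] [PartialOrder G]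
    [IsOrderedAddMonoid G] {L U c x : G} (hx : x ∈ Set.Icc L c) (h : c - L ≤ U - c) :
    Equiv.pointReflection c x ∈ Set.Icc L U := by
  rw [Equiv.pointReflection_apply, vsub_eq_sub, vadd_eq_add]
  constructor
  · exact (hx.1.trans hx.2).trans (le_add_of_nonneg_left (sub_nonneg.mpr hx.2))
  · exact le_sub_iff_add_le.mp ((sub_le_sub_left hx.1 c).trans h)

/-- Claim 2 core: the integral of a nonnegative concave function over the left part
`[L, c]` of the interval is at most `2 * g c * (c - L)` when `c` lies in the left half. -/
theorem stmt_2 (L U c : ℝ) (hLU : L < U) (g : ℝ → ℝ)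
    (hconc : ConcaveOn ℝ (Set.Icc L U) g)
    (hnonneg : ∀ x ∈ Set.Icc L U, 0 ≤ g x)
    (hc : c ∈ Set.Icc L U) (hhalf : c - L ≤ U - c) :
    ∫ x in L..c, g x ≤ 2 * g c * (c - L) := by
  -- A bound on the norm of `g` controls the integral with no integrability side condition.
  have norm_le_two_mul : ∀ x ∈ Set.uIoc L c, ‖g x‖ ≤ 2 * g c := by
    intro x hx
    rw [Set.uIoc_of_le hc.1] at hx
    have hxLU : x ∈ Set.Icc L U := ⟨hx.1.le, hx.2.trans hc.2⟩
    have hx' := pointReflection_mem_Icc_of_sub_le_sub (Set.Ioc_subset_Icc_self hx) hhalf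
    rw [Real.norm_of_nonneg (hnonneg x hxLU)]
    exact le_two_smul_of_concaveOn_of_pointReflection_nonneg hconc hxLU hx' (hnonneg _ hx')
  calc
    ∫ x in L..c, g x ≤ ‖∫ x in L..c, g x‖ := Real.le_norm_self _
    _ ≤ 2 * g c * |c - L| := intervalIntegral.norm_integral_le_of_norm_le_const norm_le_two_mul
    _ = 2 * g c * (c - L) := by rw [abs_of_nonneg (sub_nonneg.mpr hc.1)]
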